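/- For all m, k, ℓ, r ≥ 1 there exists n ∈ ℕ such that for every r-coloring of FIN_{≤k}(n)^[m], there exists a block sequence (b_0,…,b_{ℓ−1}) in FIN_k(n) of length ℓ such that TS_j(b_0,…,b_{ℓ−1})^[m] is monochromatic for every j = 1,2,…,k. -/

import Mathlib

/-- `FINf k n`: functions `{0,…,n-1} → {0,…,k}` with maximum value `k`
(encoded as functions `ℕ → ℕ` vanishing from `n` on). -/
def FINf (k n : ℕ) : Set (ℕ → ℕ) :=
  {b | (∀ i, b i ≤ k) ∧ (∀ i, n ≤ i → b i = 0) ∧ ∃ i, i < n ∧ b i = k}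

/-- `Supp b < Supp b'`. -/
def SuppLT (b b' : ℕ → ℕ) : Prop :=
  ∀ m, b m ≠ 0 → ∀ m', b' m' ≠ 0 → m < m'

/-- `f` is (the extension to `ℕ` of) a nondecreasing surjection `{0,…,k} → {0,…,j}`. -/
def IsTetrisFn (k j : ℕ) (f : ℕ → ℕ) : Prop :=
  (∀ i i', i' ≤ i → i ≤ k → f i' ≤ f i) ∧ (∀ i, i ≤ k → f i ≤ j) ∧
    ∀ m, m ≤ j → ∃ i, i ≤ k ∧ f i = m

/-- A block sequence `(b_0,…,b_{ℓ-1})` in `FINf k n`. -/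
def IsBlockSeqFin (k n ℓ : ℕ) (b : ℕ → ℕ → ℕ) : Prop :=
  (∀ i, i < ℓ → b i ∈ FINf k n) ∧ ∀ i, i + 1 < ℓ → SuppLT (b i) (b (i + 1))

/-- An element of `FIN_k(n)^[m]`: a block sequence in `FINf k n` of length `m`. -/
def IsBlockTupleFin (k n m : ℕ) (t : Fin m → ℕ → ℕ) : Prop :=
  (∀ d, t d ∈ FINf k n) ∧
    ∀ (d : ℕ) (h : d + 1 < m), SuppLT (t ⟨d, Nat.lt_of_succ_lt h⟩) (t ⟨d + 1, h⟩)

/-- The set `TS_j(b_0,…,b_{ℓ-1})^[m]` inside `FIN_j(n)^[m]`: all `(a_0,…,a_{m-1})`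
such that for some `0 = n_0 < n_1 < ⋯ < n_m ≤ ℓ`, `j_i ∈ {0,…,k}` and nondecreasing
surjections `f_i : {0,…,k} → {0,…,j_i}`, one has
`a_d = f_{n_d}∘b_{n_d} + ⋯ + f_{n_{d+1}-1}∘b_{n_{d+1}-1}` and
`max {j_{n_d},…,j_{n_{d+1}-1}} = j` for every `d < m`. -/
def TSmfin (k j n m ℓ : ℕ) (b : ℕ → ℕ → ℕ) : Set (Fin m → ℕ → ℕ) :=
  {a | IsBlockTupleFin j n m a ∧ ∃ (ns : ℕ → ℕ) (js : ℕ → ℕ) (fs : ℕ → ℕ → ℕ),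
    ns 0 = 0 ∧ (∀ d, d < m → ns d < ns (d + 1)) ∧ ns m ≤ ℓ ∧
    (∀ i, i < ns m → js i ≤ k ∧ IsTetrisFn k (js i) (fs i)) ∧
    ∀ d : Fin m,
      (∀ i, ns d.val ≤ i → i < ns (d.val + 1) → js i ≤ j) ∧
      (∃ i, ns d.val ≤ i ∧ i < ns (d.val + 1) ∧ js i = j) ∧
      a d = ∑ i ∈ Finset.Ico (ns d.val) (ns (d.val + 1)), (fs i) ∘ (b i)}

/-!
The ultrafilters on `ℕ → ℕ` whose generic element has finite support, arbitrarily far out, form a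
compact right topological monoid, on which the maps `b ↦ f ∘ b` act by continuous endomorphisms.
Call a sequence `x 0 = 0, x 1, x 2, …` in it a tower if every tetris map `f` sends `x j` to
`x (f j)`. The images of one idempotent ultrafilter under `b ↦ stepMap j ∘ b`, which replaces all
nonzero values by `j`, form a tower of idempotents. The descending sums `x j + ⋯ + x p` form a tower
again, so the towers that agree with `x` up to `p` and absorb `x p` on the right form a nonempty
compact semigroup; choosing idempotents there for `p = 1, …, k` leads to a tower such that
`x j + x i = x j` for all `i ≤ j` with `i ≤ k`. Its ascending sums `y j = x 0 + ⋯ + x j` then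
satisfy `y i + y j = y (max i j)` for all `i ≤ k` and all `j`.

Hence if `b 0, b 1, …` are successively generic for `y k`, then a block sum of tetris images of them
with maximum `j` is generic for `y j`, and `m` successive block sums are generic for the `m`-th
power of `y j`. The color of the latter depends on `j` only. Since there are finitely many ways to
form an element of `TS_j(b 0, …, b (ℓ - 1))^[m]`, this gives `b` for colorings of all tuples, and
compactness of the space of colorings turns it into the finite statement.
-/

open Filter Function

/-! ### Tetris maps -/

/-- Tetris maps: the maps of `ℕ` fixing `0` whose restriction to each `{0,…,k}` is a nondecreasing
surjection onto `{0,…,f k}`. Equivalently, and this is the encoding, each step is by `0` or `1`. -/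
def IsTetrisMap (f : ZeroHom ℕ ℕ) : Prop :=
  ∀ n, f (n + 1) = f n ∨ f (n + 1) = f n + 1

theorem IsTetrisMap.apply_le {f : ZeroHom ℕ ℕ} (hf : IsTetrisMap f) (n : ℕ) : f n ≤ n := by
  induction n with
  | zero => exact (map_zero f).le
  | succ n ih => rcases hf n with h | h <;> omega

/-- The map `n ↦ min n j`. It fixes `x j` in every tower, so generic functions for `x j` have values
at most `j`. -/
def minMap (j : ℕ) : ZeroHom ℕ ℕ := ⟨fun n => min n j, Nat.zero_min j⟩

theorem isTetrisMap_minMap (j : ℕ) : IsTetrisMap (minMap j) := fun n => by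
  change min (n + 1) j = min n j ∨ min (n + 1) j = min n j + 1
  omega

/-- The map `n ↦ n - j` (truncated). It sends `x (j + 1)` to `x 1` in every tower, so generic
functions for `x (j + 1)` have values above `j`. -/
def subMap (j : ℕ) : ZeroHom ℕ ℕ := ⟨fun n => n - j, Nat.zero_sub j⟩

theorem isTetrisMap_subMap (j : ℕ) : IsTetrisMap (subMap j) := fun n => by
  change n + 1 - j = n - j ∨ n + 1 - j = n - j + 1
  omega

/-- The map sending `0` to `0` and everything else to `j`; it is a tetris map only for `j ≤ 1`. -/
def stepMap (j : ℕ) : ZeroHom ℕ ℕ := ⟨fun n => if n = 0 then 0 else j, if_pos rfl⟩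

theorem stepMap_of_ne_zero {n : ℕ} (j : ℕ) (hn : n ≠ 0) : stepMap j n = j := if_neg hn

theorem comp_stepMap (f : ZeroHom ℕ ℕ) (j : ℕ) : f.comp (stepMap j) = stepMap (f j) := by
  ext n
  rcases eq_or_ne n 0 with rfl | hn
  · simp
  · simp [stepMap_of_ne_zero _ hn]

/-- The tetris maps that are constant from `k` on. They represent the tetris operations on
functions with values in `{0,…,k}`, and there are finitely many of them. -/
def tetrisMapsUpTo (k : ℕ) : Set (ZeroHom ℕ ℕ) :=
  {f | IsTetrisMap f ∧ ∀ n, k ≤ n → f n = f k}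

theorem IsTetrisFn.map_zero {k j : ℕ} {f : ℕ → ℕ} (hf : IsTetrisFn k j f) : f 0 = 0 := by
  obtain ⟨i, hi, h0⟩ := hf.2.2 0 (Nat.zero_le j)
  exact Nat.le_zero.1 (h0 ▸ hf.1 i 0 (Nat.zero_le i) hi)

theorem IsTetrisFn.map_top {k j : ℕ} {f : ℕ → ℕ} (hf : IsTetrisFn k j f) : f k = j := by
  obtain ⟨i, hi, h⟩ := hf.2.2 j le_rfl
  exact (hf.2.1 k le_rfl).antisymm (h ▸ hf.1 k i hi le_rfl)

theorem IsTetrisFn.map_succ {k j n : ℕ} {f : ℕ → ℕ} (hf : IsTetrisFn k j f) (hn : n < k) :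
    f (n + 1) = f n ∨ f (n + 1) = f n + 1 := by
  have hle : f n ≤ f (n + 1) := hf.1 _ _ n.le_succ hn
  by_contra! hjump
  obtain ⟨i, hi, hfi⟩ := hf.2.2 (f n + 1) (by have := hf.2.1 (n + 1) hn; omega)
  rcases le_or_gt i n with hin | hin
  · have := hf.1 n i hin hn.le
    omega
  · have := hf.1 i (n + 1) hin hi
    omega

theorem IsTetrisFn.exists_mem_tetrisMapsUpTo {k j : ℕ} {f : ℕ → ℕ} (hf : IsTetrisFn k j f) :
    ∃ g ∈ tetrisMapsUpTo k, ∀ n ≤ k, g n = f n := by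
  refine ⟨⟨fun n => f (min n k), by simpa using hf.map_zero⟩, ⟨fun n => ?_, fun n hn => ?_⟩,
    fun n hn => congrArg f (min_eq_left hn)⟩
  · change f (min (n + 1) k) = f (min n k) ∨ f (min (n + 1) k) = f (min n k) + 1
    rcases lt_or_ge n k with hn | hn
    · simpa only [min_eq_left hn.le, min_eq_left (Nat.succ_le_of_lt hn)] using hf.map_succ hn
    · exact Or.inl (by rw [min_eq_right hn, min_eq_right (hn.trans n.le_succ)])
  · change f (min n k) = f (min k k)
    rw [min_eq_right hn, min_self]

theorem finite_setOf_eq_of_le {α : Type*} {s : Set α} (hs : s.Finite) (n : ℕ) :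
    {g : ℕ → α | (∀ i, g i ∈ s) ∧ ∀ i, n ≤ i → g i = g n}.Finite := by
  have : Finite s := hs
  refine (Set.finite_range fun (h : Fin (n + 1) → s) i =>
    (h ⟨min i n, Nat.lt_succ_of_le (min_le_right i n)⟩ : α)).subset ?_
  rintro g ⟨hgs, hg⟩
  refine ⟨fun i => ⟨g i, hgs i⟩, funext fun i => ?_⟩
  rcases le_total i n with hi | hi
  · simp [hi]
  · simp [hi, hg i hi]

theorem tetrisMapsUpTo_finite (k : ℕ) : (tetrisMapsUpTo k).Finite := by
  refine ((finite_setOf_eq_of_le (Set.finite_Iic k) k).preimage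
    DFunLike.coe_injective.injOn).subset fun f hf => ⟨fun n => ?_, hf.2⟩
  rcases le_total n k with hn | hn
  · exact (hf.1.apply_le n).trans hn
  · exact (hf.2 n hn).trans_le (hf.1.apply_le k)

/-! ### Equivariant towers in a compact semigroup -/

section Towers

variable {M : Type*} [AddMonoid M] {φ : ZeroHom ℕ ℕ → M →+ M} {x y : ℕ → M} {p : ℕ}

/-- Towers in a monoid on which self-maps of `ℕ` act by endomorphisms: sequences starting at `0`
that are equivariant under tetris maps. -/
structure IsTower (φ : ZeroHom ℕ ℕ → M →+ M) (x : ℕ → M) : Prop where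
  zero : x 0 = 0
  map_tetris : ∀ f, IsTetrisMap f → ∀ j, φ f (x j) = x (f j)

theorem IsTower.add (hx : IsTower φ x) (hy : IsTower φ y) : IsTower φ (x + y) where
  zero := by rw [Pi.add_apply, hx.zero, hy.zero, add_zero]
  map_tetris f hf j := by
    rw [Pi.add_apply, map_add, hx.map_tetris f hf, hy.map_tetris f hf, Pi.add_apply]

/-- Right absorption below level `p`: every `x j` absorbs on its right the terms `x i` with `i ≤ j`
and `i < p`. -/
def AbsorbsBelow (p : ℕ) (x : ℕ → M) : Prop :=
  ∀ i < p, ∀ j, i ≤ j → x j + x i = x j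

/-- The sequence `x` up to `p`, continued by the descending sums `x j + x (j - 1) + ⋯ + x p`. -/
def descendingSum (p : ℕ) (x : ℕ → M) : ℕ → M
  | 0 => x 0
  | j + 1 => if j + 1 ≤ p then x (j + 1) else x (j + 1) + descendingSum p x j

theorem descendingSum_of_le {j : ℕ} (hj : j ≤ p) : descendingSum p x j = x j := by
  cases j with
  | zero => rfl
  | succ j => rw [descendingSum, if_pos hj]

theorem descendingSum_succ {j : ℕ} (hj : p ≤ j) :
    descendingSum p x (j + 1) = x (j + 1) + descendingSum p x j := by
  rw [descendingSum, if_neg (by omega)]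

theorem descendingSum_add_self (hidem : ∀ j, x j + x j = x j) {j : ℕ} (hj : p ≤ j) :
    descendingSum p x j + x p = descendingSum p x j := by
  induction j, hj using Nat.le_induction with
  | base => rw [descendingSum_of_le le_rfl, hidem]
  | succ j hj ih => rw [descendingSum_succ hj, add_assoc, ih]

theorem add_descendingSum_self (hidem : ∀ j, x j + x j = x j) (j : ℕ) :
    x j + descendingSum p x j = descendingSum p x j := by
  rcases le_or_gt j p with hj | hj
  · rw [descendingSum_of_le hj, hidem]
  · obtain ⟨i, rfl⟩ := Nat.exists_eq_add_of_lt hj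
    rw [descendingSum_succ (Nat.le_add_right p i), ← add_assoc, hidem]

theorem AbsorbsBelow.succ_add_descendingSum (habs : AbsorbsBelow p x) (j : ℕ) :
    x (j + 1) + descendingSum p x j = descendingSum p x (j + 1) := by
  rcases le_or_gt p j with hj | hj
  · rw [descendingSum_succ hj]
  · rw [descendingSum_of_le hj.le, descendingSum_of_le hj, habs j hj _ j.le_succ]

/-- A tetris map sends a descending sum to one of the same shape, up to repeated terms, which
collapse by idempotence, and terms below `p`, which are absorbed. -/
theorem IsTower.isTower_descendingSum (hx : IsTower φ x) (hidem : ∀ j, x j + x j = x j)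
    (habs : AbsorbsBelow p x) : IsTower φ (descendingSum p x) where
  zero := hx.zero
  map_tetris f hf j := by
    induction j with
    | zero => rw [map_zero f]; exact (hx.map_tetris f hf 0).trans (by rw [map_zero f]; rfl)
    | succ j ih =>
      rw [← habs.succ_add_descendingSum, map_add, ih, hx.map_tetris f hf]
      rcases hf j with h | h <;> rw [h]
      · exact add_descendingSum_self hidem _
      · exact habs.succ_add_descendingSum _

/-- The towers that agree with `x` up to level `p` and absorb `x p` on the right from there on. -/
def absorbingTowers (φ : ZeroHom ℕ ℕ → M →+ M) (x : ℕ → M) (p : ℕ) : Set (ℕ → M) :=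
  {y | IsTower φ y ∧ (∀ i, i ≤ p → y i = x i) ∧ ∀ j, p ≤ j → y j + x p = y j}

theorem descendingSum_mem_absorbingTowers (hx : IsTower φ x) (hidem : ∀ j, x j + x j = x j)
    (habs : AbsorbsBelow p x) : descendingSum p x ∈ absorbingTowers φ x p :=
  ⟨hx.isTower_descendingSum hidem habs, fun _ => descendingSum_of_le,
    fun _ => descendingSum_add_self hidem⟩

theorem add_mem_absorbingTowers (hidem : ∀ j, x j + x j = x j) {z : ℕ → M}
    (hy : y ∈ absorbingTowers φ x p) (hz : z ∈ absorbingTowers φ x p) :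
    y + z ∈ absorbingTowers φ x p := by
  refine ⟨hy.1.add hz.1, fun i hi => ?_, fun j hj => ?_⟩
  · rw [Pi.add_apply, hy.2.1 i hi, hz.2.1 i hi, hidem]
  · rw [Pi.add_apply, add_assoc, hz.2.2 j hj]

theorem AbsorbsBelow.succ_of_mem_absorbingTowers (habs : AbsorbsBelow p x)
    (hy : y ∈ absorbingTowers φ x p) : AbsorbsBelow (p + 1) y := by
  obtain ⟨-, hyx, hyp⟩ := hy
  intro i hi j hij
  rw [hyx i (Nat.le_of_lt_succ hi)]
  rcases le_or_gt p j with hj | hj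
  · rcases Nat.lt_succ_iff_lt_or_eq.1 hi with hip | rfl
    · rw [← hyp j hj, add_assoc, habs i hip p hip.le]
    · exact hyp j hj
  · rw [hyx j hj.le, habs i (hij.trans_lt hj) j hij]

/-- The ascending sums `x 0 + x 1 + ⋯ + x j`. -/
def ascendingSum (x : ℕ → M) : ℕ → M
  | 0 => x 0
  | j + 1 => ascendingSum x j + x (j + 1)

theorem ascendingSum_add_self (hidem : ∀ j, x j + x j = x j) (j : ℕ) :
    ascendingSum x j + x j = ascendingSum x j := by
  cases j with
  | zero => exact hidem 0
  | succ j => rw [ascendingSum, add_assoc, hidem]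

theorem IsTower.isTower_ascendingSum (hx : IsTower φ x) (hidem : ∀ j, x j + x j = x j) :
    IsTower φ (ascendingSum x) where
  zero := hx.zero
  map_tetris f hf j := by
    induction j with
    | zero => rw [map_zero f]; exact (hx.map_tetris f hf 0).trans (by rw [map_zero f]; rfl)
    | succ j ih =>
      rw [ascendingSum, map_add, ih, hx.map_tetris f hf]
      rcases hf j with h | h <;> rw [h]
      · exact ascendingSum_add_self hidem _
      · rfl

theorem AbsorbsBelow.ascendingSum_add (habs : AbsorbsBelow p x) {i j : ℕ} (hij : i ≤ j)
    (hj : j < p) : ascendingSum x j + x i = ascendingSum x j := by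
  cases j with
  | zero => rw [Nat.le_zero.1 hij]; exact habs 0 hj 0 le_rfl
  | succ j => rw [ascendingSum, add_assoc, habs i (hij.trans_lt hj) _ hij]

theorem AbsorbsBelow.ascendingSum_add_of_le (habs : AbsorbsBelow p x) {i j : ℕ} (hij : i ≤ j)
    (hj : j < p) : ascendingSum x j + ascendingSum x i = ascendingSum x j := by
  induction i with
  | zero => exact habs.ascendingSum_add hij hj
  | succ i ih =>
    rw [ascendingSum, ← add_assoc, ih (i.le_succ.trans hij), habs.ascendingSum_add hij hj]

theorem AbsorbsBelow.ascendingSum_add_of_ge (habs : AbsorbsBelow p x) {i j : ℕ} (hij : i ≤ j)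
    (hi : i < p) : ascendingSum x i + ascendingSum x j = ascendingSum x j := by
  induction j, hij using Nat.le_induction with
  | base => exact habs.ascendingSum_add_of_le le_rfl hi
  | succ j _ ih => rw [ascendingSum, ← add_assoc, ih]

theorem AbsorbsBelow.ascendingSum_add_ascendingSum (habs : AbsorbsBelow p x) {i : ℕ}
    (hi : i < p) (j : ℕ) :
    ascendingSum x i + ascendingSum x j = ascendingSum x (max i j) := by
  rcases le_total i j with hij | hji
  · rw [max_eq_right hij, habs.ascendingSum_add_of_ge hij hi]
  · rw [max_eq_left hji, habs.ascendingSum_add_of_le hji hi]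

section Compact

variable [TopologicalSpace M] [T2Space M]

theorem isClosed_setOf_isTower (hφ : ∀ f, Continuous (φ f)) : IsClosed {x | IsTower φ x} := by
  have : {x | IsTower φ x} =
      {x | x 0 = 0} ∩ ⋂ f, ⋂ (_ : IsTetrisMap f), ⋂ j, {x | φ f (x j) = x (f j)} := by
    ext x
    simpa using ⟨fun h => ⟨h.zero, h.map_tetris⟩, fun h => ⟨h.1, h.2⟩⟩
  rw [this]
  refine (isClosed_eq (continuous_apply 0) continuous_const).inter <|
    isClosed_iInter fun f => isClosed_iInter fun _ => isClosed_iInter fun j => ?_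
  exact isClosed_eq ((hφ f).comp (continuous_apply j)) (continuous_apply (f j))

theorem isClosed_absorbingTowers (hφ : ∀ f, Continuous (φ f))
    (hadd : ∀ v : M, Continuous (· + v)) : IsClosed (absorbingTowers φ x p) := by
  simp only [absorbingTowers, Set.ofPred_and, Set.ofPred_forall]
  refine (isClosed_setOf_isTower hφ).inter (IsClosed.inter ?_ ?_)
  · exact isClosed_iInter fun i => isClosed_iInter fun _ =>
      isClosed_eq (continuous_apply i) continuous_const
  · exact isClosed_iInter fun j => isClosed_iInter fun _ =>
      isClosed_eq ((hadd (x p)).comp (continuous_apply j)) (continuous_apply j)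

variable [CompactSpace M]

theorem IsTower.exists_absorbsBelow_succ (hφ : ∀ f, Continuous (φ f))
    (hadd : ∀ v : M, Continuous (· + v)) (hx : IsTower φ x) (hidem : ∀ j, x j + x j = x j)
    (habs : AbsorbsBelow p x) :
    ∃ y, IsTower φ y ∧ (∀ j, y j + y j = y j) ∧ (∀ i ≤ p, y i = x i) ∧ AbsorbsBelow (p + 1) y := by
  obtain ⟨y, hy, hyidem⟩ := exists_idempotent_in_compact_add_subsemigroup
    (fun v => continuous_pi fun j => (hadd (v j)).comp (continuous_apply j))
    (absorbingTowers φ x p) ⟨_, descendingSum_mem_absorbingTowers hx hidem habs⟩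
    (isClosed_absorbingTowers hφ hadd).isCompact
    fun _ hy _ hz => add_mem_absorbingTowers hidem hy hz
  exact ⟨y, hy.1, congrFun hyidem, hy.2.1, habs.succ_of_mem_absorbingTowers hy⟩

theorem IsTower.exists_absorbsBelow (hφ : ∀ f, Continuous (φ f))
    (hadd : ∀ v : M, Continuous (· + v)) (hx : IsTower φ x) (hidem : ∀ j, x j + x j = x j)
    (p : ℕ) :
    ∃ y, IsTower φ y ∧ (∀ j, y j + y j = y j) ∧ y 1 = x 1 ∧ AbsorbsBelow (p + 1) y := by
  induction p with
  | zero =>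
    refine ⟨x, hx, hidem, rfl, fun i hi j _ => ?_⟩
    rw [Nat.lt_one_iff.1 hi, hx.zero, add_zero]
  | succ p ih =>
    obtain ⟨y, hy, hyidem, hyx, habs⟩ := ih
    obtain ⟨z, hz, hzidem, hzy, hzabs⟩ := hy.exists_absorbsBelow_succ hφ hadd hyidem habs
    exact ⟨z, hz, hzidem, (hzy 1 (Nat.le_add_left 1 p)).trans hyx, hzabs⟩

theorem IsTower.exists_add_eq_max (hφ : ∀ f, Continuous (φ f))
    (hadd : ∀ v : M, Continuous (· + v)) (hx : IsTower φ x) (hidem : ∀ j, x j + x j = x j)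
    (k : ℕ) :
    ∃ y, IsTower φ y ∧ y 1 = x 1 ∧ ∀ i ≤ k, ∀ j, y i + y j = y (max i j) := by
  obtain ⟨y, hy, hyidem, hyx, habs⟩ := hx.exists_absorbsBelow hφ hadd hidem k
  refine ⟨ascendingSum y, hy.isTower_ascendingSum hyidem, ?_, fun i hi =>
    habs.ascendingSum_add_ascendingSum (Nat.lt_succ_of_le hi)⟩
  change y 0 + y 1 = x 1
  rw [hy.zero, zero_add, hyx]

end Compact

end Towers

/-! ### Ultrafilters escaping to infinity -/

attribute [local instance] Ultrafilter.addSemigroup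

/-- The additive monoid structure on the ultrafilters on an additive monoid `M`, whose zero is the
principal ultrafilter at `0`. -/
abbrev ultrafilterAddMonoid (M : Type*) [AddMonoid M] : AddMonoid (Ultrafilter M) where
  zero := pure 0
  zero_add U := Ultrafilter.coe_inj.1 <| Filter.ext' fun p => by
    change (∀ᶠ b in (pure 0 + U : Ultrafilter M), p b) ↔ _
    rw [Ultrafilter.eventually_add]
    simp
  add_zero U := Ultrafilter.coe_inj.1 <| Filter.ext' fun p => by
    change (∀ᶠ b in (U + pure 0 : Ultrafilter M), p b) ↔ _
    rw [Ultrafilter.eventually_add]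
    simp
  nsmul := letI : Zero (Ultrafilter M) := ⟨pure 0⟩; nsmulRec

attribute [local instance] ultrafilterAddMonoid

/-- The ultrafilters on `ℕ → ℕ` whose generic element has finite support, contained in any given
final segment of `ℕ`. -/
def escaping : AddSubmonoid (Ultrafilter (ℕ → ℕ)) where
  carrier := {U | ∀ n, ∀ᶠ (b : ℕ → ℕ) in U, (∃ N, ∀ i, N ≤ i → b i = 0) ∧ ∀ i < n, b i = 0}
  zero_mem' n := ⟨⟨0, fun _ _ => rfl⟩, fun _ _ => rfl⟩
  add_mem' {U V} hU hV n := by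
    rw [Ultrafilter.eventually_add]
    filter_upwards [hU n] with b ⟨⟨N, hbN⟩, hbn⟩
    filter_upwards [hV n] with b' ⟨⟨N', hbN'⟩, hbn'⟩
    refine ⟨⟨max N N', fun i hi => ?_⟩, fun i hi => ?_⟩
    · rw [Pi.add_apply, hbN i (le_of_max_le_left hi), hbN' i (le_of_max_le_right hi)]
    · rw [Pi.add_apply, hbn i hi, hbn' i hi]

theorem isClosed_escaping : IsClosed (escaping : Set (Ultrafilter (ℕ → ℕ))) := by
  change IsClosed {U : Ultrafilter (ℕ → ℕ) | ∀ n, _ ∈ U}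
  rw [Set.ofPred_forall]
  exact isClosed_iInter fun n => ultrafilter_isClosed_basic _

instance : CompactSpace escaping := isCompact_iff_compactSpace.1 isClosed_escaping.isCompact

theorem continuous_add_right_escaping (V : escaping) : Continuous (· + V) :=
  ((Ultrafilter.continuous_add_left V.1).comp continuous_subtype_val).subtype_mk _

/-- The action of a self-map of `ℕ` on escaping ultrafilters, induced by `b ↦ f ∘ b`. The latter is
additive only on functions with disjoint supports, but generic summands are of this kind. -/
def pushforward (f : ZeroHom ℕ ℕ) : escaping →+ escaping where
  toFun U := ⟨U.1.map (f ∘ ·), fun n => by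
    change ∀ᶠ b in (U.1 : Filter (ℕ → ℕ)), _
    filter_upwards [U.2 n] with b ⟨⟨N, hbN⟩, hbn⟩
    exact ⟨⟨N, fun i hi => by simp [hbN i hi]⟩, fun i hi => by simp [hbn i hi]⟩⟩
  map_zero' := Subtype.ext <| Ultrafilter.coe_inj.1 <| Filter.ext' fun P => by
    have : f ∘ (0 : ℕ → ℕ) = 0 := funext fun _ => map_zero f
    change P (f ∘ 0) ↔ P 0
    rw [this]
  map_add' U V := Subtype.ext <| Ultrafilter.coe_inj.1 <| Filter.ext' fun P => by
    change (∀ᶠ b in (U.1 : Filter (ℕ → ℕ)), ∀ᶠ b' in (V.1 : Filter (ℕ → ℕ)), P (f ∘ (b + b'))) ↔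
      ∀ᶠ b in (U.1 : Filter (ℕ → ℕ)), ∀ᶠ b' in (V.1 : Filter (ℕ → ℕ)), P (f ∘ b + f ∘ b')
    refine eventually_congr ?_
    filter_upwards [U.2 0] with b ⟨⟨N, hbN⟩, _⟩
    refine eventually_congr ?_
    filter_upwards [V.2 N] with b' ⟨_, hbN'⟩
    have : f ∘ (b + b') = f ∘ b + f ∘ b' := funext fun i => by
      rcases lt_or_ge i N with hi | hi
      · simp [hbN' i hi]
      · simp [hbN i hi]
    rw [this]

theorem eventually_pushforward {f : ZeroHom ℕ ℕ} {U : escaping} {P : (ℕ → ℕ) → Prop} :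
    (∀ᶠ (b : ℕ → ℕ) in (pushforward f U).1, P b) ↔ ∀ᶠ (b : ℕ → ℕ) in U.1, P (f ∘ b) :=
  Iff.rfl

theorem continuous_pushforward (f : ZeroHom ℕ ℕ) : Continuous (pushforward f) := by
  have hmap : Continuous (Ultrafilter.map fun b : ℕ → ℕ => f ∘ b) :=
    ultrafilterBasis_is_basis.continuous_iff.2 <| Set.forall_mem_range.2 fun s =>
      ultrafilter_isOpen_basic ((fun b : ℕ → ℕ => f ∘ b) ⁻¹' s)
  exact (hmap.comp continuous_subtype_val).subtype_mk _

theorem pushforward_comp (f g : ZeroHom ℕ ℕ) (U : escaping) :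
    pushforward f (pushforward g U) = pushforward (f.comp g) U :=
  rfl

theorem exists_escaping_ne_zero : ∃ U : escaping, ∀ᶠ (b : ℕ → ℕ) in U.1, b ≠ 0 := by
  refine ⟨⟨(hyperfilter ℕ).map fun m => Pi.single m 1, fun n => ?_⟩, ?_⟩
  · change ∀ᶠ m in (hyperfilter ℕ : Filter ℕ), _
    filter_upwards [Nat.hyperfilter_le_atTop (eventually_ge_atTop n)] with m hm
    exact ⟨⟨m + 1, fun i hi => Pi.single_eq_of_ne (by omega) 1⟩,
      fun i hi => Pi.single_eq_of_ne (by omega) 1⟩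
  · change ∀ᶠ m in (hyperfilter ℕ : Filter ℕ), (Pi.single m 1 : ℕ → ℕ) ≠ 0
    exact Eventually.of_forall fun m => Pi.single_ne_zero_iff.2 one_ne_zero

theorem exists_escaping_idempotent :
    ∃ U : escaping, (∀ᶠ (b : ℕ → ℕ) in U.1, b ≠ 0) ∧ U + U = U := by
  refine exists_idempotent_in_compact_add_subsemigroup continuous_add_right_escaping
    {U | ∀ᶠ (b : ℕ → ℕ) in U.1, b ≠ 0} exists_escaping_ne_zero ?_ fun U hU V _ => ?_
  · exact ((ultrafilter_isClosed_basic {b | b ≠ 0}).preimage continuous_subtype_val).isCompact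
  · change ∀ᶠ b in (U.1 : Filter (ℕ → ℕ)), ∀ᶠ b' in (V.1 : Filter (ℕ → ℕ)), b + b' ≠ 0
    filter_upwards [hU] with b hb
    exact Eventually.of_forall fun b' h => hb (add_eq_zero.1 h).1

theorem exists_idempotent_isTower : ∃ x, IsTower pushforward x ∧ (∀ j, x j + x j = x j) ∧
    ∀ᶠ (b : ℕ → ℕ) in (x 1).1, b ≠ 0 := by
  obtain ⟨U, hU, hUU⟩ := exists_escaping_idempotent
  refine ⟨fun j => pushforward (stepMap j) U, ⟨?_, fun f _ j => ?_⟩, fun j => ?_, ?_⟩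
  · have : stepMap 0 = 0 := ZeroHom.ext fun n => ite_self 0
    refine Subtype.ext <| Ultrafilter.coe_inj.1 <| Filter.ext' fun P => ?_
    rw [this]
    exact eventually_const (f := (U.1 : Filter (ℕ → ℕ))) (p := P 0)
  · rw [pushforward_comp, comp_stepMap]
  · rw [← map_add, hUU]
  · rw [eventually_pushforward]
    filter_upwards [hU] with b hb
    obtain ⟨i, hi⟩ := Function.ne_iff.1 hb
    exact Function.ne_iff.2 ⟨i, by simp [stepMap_of_ne_zero 1 hi]⟩

theorem exists_isTower_add_eq_max (k : ℕ) : ∃ x, IsTower pushforward x ∧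
    (∀ᶠ (b : ℕ → ℕ) in (x 1).1, b ≠ 0) ∧ ∀ i ≤ k, ∀ j, x i + x j = x (max i j) := by
  obtain ⟨x, hx, hidem, hx1⟩ := exists_idempotent_isTower
  obtain ⟨y, hy, hy1, hmax⟩ :=
    hx.exists_add_eq_max continuous_pushforward continuous_add_right_escaping hidem k
  exact ⟨y, hy, hy1 ▸ hx1, hmax⟩

section Generic

variable {x : ℕ → escaping}

theorem IsTower.eventually_apply (hx : IsTower pushforward x) {f : ZeroHom ℕ ℕ}
    (hf : IsTetrisMap f) {j : ℕ} {P : (ℕ → ℕ) → Prop} :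
    (∀ᶠ (b : ℕ → ℕ) in (x (f j)).1, P b) ↔ ∀ᶠ (b : ℕ → ℕ) in (x j).1, P (f ∘ b) := by
  rw [← hx.map_tetris f hf, eventually_pushforward]

theorem IsTower.eventually_le (hx : IsTower pushforward x) (j : ℕ) :
    ∀ᶠ (b : ℕ → ℕ) in (x j).1, ∀ i, b i ≤ j := by
  have h := hx.eventually_apply (isTetrisMap_minMap j) (j := j) (P := fun b => ∀ i, b i ≤ j)
  rw [show minMap j j = j from min_self j] at h
  exact h.2 (Eventually.of_forall fun b i => min_le_right (b i) j)

theorem IsTower.eventually_exists_ge (hx : IsTower pushforward x)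
    (hx1 : ∀ᶠ (b : ℕ → ℕ) in (x 1).1, b ≠ 0) {j : ℕ} (hj : 1 ≤ j) :
    ∀ᶠ (b : ℕ → ℕ) in (x j).1, ∃ i, j ≤ b i := by
  rw [← show subMap (j - 1) j = 1 from Nat.sub_sub_self hj,
    hx.eventually_apply (isTetrisMap_subMap (j - 1))] at hx1
  filter_upwards [hx1] with b hb
  obtain ⟨i, hi⟩ := Function.ne_iff.1 hb
  have : b i - (j - 1) ≠ 0 := hi
  exact ⟨i, by omega⟩

theorem IsTower.eventually_mem_FINf (hx : IsTower pushforward x)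
    (hx1 : ∀ᶠ (b : ℕ → ℕ) in (x 1).1, b ≠ 0) {j : ℕ} (hj : 1 ≤ j) (n : ℕ) :
    ∀ᶠ (b : ℕ → ℕ) in (x j).1, (∃ N, b ∈ FINf j N) ∧ ∀ i < n, b i = 0 := by
  filter_upwards [hx.eventually_le j, hx.eventually_exists_ge hx1 hj, (x j).2 n]
    with b hle ⟨i, hi⟩ ⟨⟨N, hbN⟩, hbn⟩
  refine ⟨⟨N, hle, hbN, i, ?_, (hle i).antisymm hi⟩, hbn⟩
  by_contra! h
  have := hbN i h
  omega

end Generic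

/-! ### Powers of ultrafilters -/

/-- The `n`-th power of an ultrafilter `U`, as an ultrafilter on sequences that vanish from `n` on;
each of the first `n` terms of a generic sequence is generic for `U` relative to earlier ones. -/
def ultrafilterPow {α : Type*} [Zero α] (U : Ultrafilter α) : ℕ → Ultrafilter (ℕ → α)
  | 0 => pure 0
  | n + 1 => (ultrafilterPow U n).bind fun b => U.map (update b n)

theorem eventually_ultrafilterPow_succ {α : Type*} [Zero α] {U : Ultrafilter α} {n : ℕ}
    {P : (ℕ → α) → Prop} : (∀ᶠ b in ultrafilterPow U (n + 1), P b) ↔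
      ∀ᶠ b in ultrafilterPow U n, ∀ᶠ y in U, P (update b n y) :=
  Iff.rfl

theorem eventually_ultrafilterPow_of_le {α : Type*} [Zero α] {U : Ultrafilter α} {N n : ℕ}
    (hN : N ≤ n) {P : (ℕ → α) → Prop} (hP : ∀ b i y, N ≤ i → (P (update b i y) ↔ P b)) :
    (∀ᶠ b in ultrafilterPow U n, P b) ↔ ∀ᶠ b in ultrafilterPow U N, P b := by
  induction n, hN using Nat.le_induction with
  | base => rfl
  | succ n hn ih => simp only [eventually_ultrafilterPow_succ, hP _ n _ hn, eventually_const, ih]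

/-- The summands are integrated out from the right, and `hmax` merges their levels. -/
theorem IsTower.eventually_sum_comp {x : ℕ → escaping} (hx : IsTower pushforward x) {k : ℕ}
    (hmax : ∀ i ≤ k, ∀ j, x i + x j = x (max i j)) {f : ℕ → ZeroHom ℕ ℕ}
    (hf : ∀ i, IsTetrisMap (f i)) {N n : ℕ} (hN : N ≤ n) {Q : (ℕ → ℕ → ℕ) → (ℕ → ℕ) → Prop}
    (hQ : ∀ b i y s, N ≤ i → (Q (update b i y) s ↔ Q b s)) :
    (∀ᶠ b in ultrafilterPow (x k).1 n, Q b (∑ i ∈ Finset.Ico N n, f i ∘ b i)) ↔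
      ∀ᶠ b in ultrafilterPow (x k).1 N,
        ∀ᶠ (s : ℕ → ℕ) in (x ((Finset.Ico N n).sup fun i => f i k)).1, Q b s := by
  induction n, hN using Nat.le_induction generalizing Q with
  | base =>
    simp only [Finset.Ico_self, Finset.sum_empty, Finset.sup_empty, Nat.bot_eq_zero, hx.zero]
    rfl
  | succ n hn ih =>
    have hsum (b : ℕ → ℕ → ℕ) (y : ℕ → ℕ) :
        ∑ i ∈ Finset.Ico N (n + 1), f i ∘ update b n y i =
          ∑ i ∈ Finset.Ico N n, f i ∘ b i + f n ∘ y := by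
      rw [Finset.sum_Ico_succ_top hn, update_self]
      congr 1
      refine Finset.sum_congr rfl fun i hi => ?_
      rw [update_of_ne (Finset.mem_Ico.1 hi).2.ne]
    have hlevel : x ((Finset.Ico N (n + 1)).sup fun i => f i k) =
        x ((Finset.Ico N n).sup fun i => f i k) + x (f n k) := by
      rw [hmax _ (Finset.sup_le fun i _ => (hf i).apply_le k), max_comm,
        ← Finset.insert_Ico_right_eq_Ico_add_one hn, Finset.sup_insert]
    simp only [eventually_ultrafilterPow_succ, hsum, hQ _ n _ _ hn]
    rw [ih (Q := fun b s => ∀ᶠ (y : ℕ → ℕ) in (x k).1, Q b (s + f n ∘ y))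
      fun b i y s hi => by simp only [hQ b i y _ hi]]
    rw [hlevel]
    refine eventually_congr (Eventually.of_forall fun b => ?_)
    refine Iff.trans ?_ (Ultrafilter.eventually_add _ _ _).symm
    exact eventually_congr (Eventually.of_forall fun s =>
      (hx.eventually_apply (hf n) (P := fun t => Q b (s + t))).symm)

/-- The sums of `f i ∘ b i` over the first `m` of the blocks `{ns d,…,ns (d + 1) - 1}`, as a
sequence continued by zeros. -/
def blockSums (ns : ℕ → ℕ) (f : ℕ → ZeroHom ℕ ℕ) (b : ℕ → ℕ → ℕ) : ℕ → ℕ → ℕ → ℕ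
  | 0 => 0
  | m + 1 => update (blockSums ns f b m) m (∑ i ∈ Finset.Ico (ns m) (ns (m + 1)), f i ∘ b i)

theorem blockSums_apply (ns : ℕ → ℕ) (f : ℕ → ZeroHom ℕ ℕ) (b : ℕ → ℕ → ℕ) {d m : ℕ}
    (hd : d < m) :
    blockSums ns f b m d = ∑ i ∈ Finset.Ico (ns d) (ns (d + 1)), f i ∘ b i := by
  induction m, hd using Nat.le_induction with
  | base => exact update_self ..
  | succ m hm ih => exact (update_of_ne (Nat.ne_of_lt hm) ..).trans ih

theorem blockSums_update {ns : ℕ → ℕ} (hns : Monotone ns) (f : ℕ → ZeroHom ℕ ℕ)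
    (b : ℕ → ℕ → ℕ) {m i : ℕ} (hi : ns m ≤ i) (y : ℕ → ℕ) :
    blockSums ns f (update b i y) m = blockSums ns f b m := by
  induction m with
  | zero => rfl
  | succ m ih =>
    rw [blockSums, blockSums, ih ((hns m.le_succ).trans hi)]
    congr 1
    refine Finset.sum_congr rfl fun i' hi' => ?_
    rw [update_of_ne ((Finset.mem_Ico.1 hi').2.trans_le hi).ne]

theorem IsTower.eventually_blockSums {x : ℕ → escaping} (hx : IsTower pushforward x) {k : ℕ}
    (hmax : ∀ i ≤ k, ∀ j, x i + x j = x (max i j)) {ns : ℕ → ℕ} (hns : Monotone ns)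
    {f : ℕ → ZeroHom ℕ ℕ} (hf : ∀ i, IsTetrisMap (f i)) {j m : ℕ}
    (hj : ∀ d < m, (Finset.Ico (ns d) (ns (d + 1))).sup (fun i => f i k) = j)
    {P : (ℕ → ℕ → ℕ) → Prop} :
    (∀ᶠ b in ultrafilterPow (x k).1 (ns m), P (blockSums ns f b m)) ↔
      ∀ᶠ a in ultrafilterPow (x j).1 m, P a := by
  induction m generalizing P with
  | zero =>
    change (∀ᶠ _ in (ultrafilterPow (x k).1 (ns 0) : Filter (ℕ → ℕ → ℕ)), P 0) ↔ P 0
    exact eventually_const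
  | succ m ih =>
    rw [eventually_ultrafilterPow_succ, ← ih fun d hd => hj d (hd.trans m.lt_succ_self),
      ← hj m m.lt_succ_self]
    exact hx.eventually_sum_comp hmax hf (hns m.le_succ)
      (Q := fun b s => P (update (blockSums ns f b m) m s))
      fun b i y s hi => by rw [blockSums_update hns f b hi]

/-! ### Block sequences -/

theorem FINf_mono (k : ℕ) : Monotone (FINf k) := fun _ _ hN _ hb =>
  ⟨hb.1, fun i hi => hb.2.1 i (hN.trans hi), hb.2.2.imp fun _ hi => ⟨hi.1.trans_le hN, hi.2⟩⟩

theorem IsBlockSeqFin.mono {k N N' ℓ : ℕ} {b : ℕ → ℕ → ℕ} (hb : IsBlockSeqFin k N ℓ b)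
    (hN : N ≤ N') : IsBlockSeqFin k N' ℓ b :=
  ⟨fun i hi => FINf_mono k hN (hb.1 i hi), hb.2⟩

theorem IsBlockSeqFin.update {k N N' ℓ : ℕ} {b : ℕ → ℕ → ℕ} (hb : IsBlockSeqFin k N ℓ b)
    {y : ℕ → ℕ} (hy : y ∈ FINf k N') (hyN : ∀ i < N, y i = 0) :
    IsBlockSeqFin k (max N N') (ℓ + 1) (update b ℓ y) := by
  refine ⟨fun i hi => ?_, fun i hi => ?_⟩
  · rcases Nat.lt_succ_iff_lt_or_eq.1 hi with hi | rfl
    · rw [update_of_ne hi.ne]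
      exact FINf_mono k (le_max_left N N') (hb.1 i hi)
    · rw [update_self]
      exact FINf_mono k (le_max_right N N') hy
  · have hi' : i < ℓ := Nat.lt_of_succ_lt_succ hi
    rw [update_of_ne hi'.ne]
    rcases Nat.lt_succ_iff_lt_or_eq.1 hi with hi | rfl
    · rw [update_of_ne hi.ne]
      exact hb.2 i hi
    · rw [update_self]
      intro p hp q hq
      by_contra! hqp
      rcases lt_or_ge p N with hpN | hpN
      · exact hq (hyN q (hqp.trans_lt hpN))
      · exact hp ((hb.1 i hi').2.1 p hpN)

theorem IsTower.eventually_isBlockSeqFin {x : ℕ → escaping} (hx : IsTower pushforward x)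
    (hx1 : ∀ᶠ (b : ℕ → ℕ) in (x 1).1, b ≠ 0) {k : ℕ} (hk : 1 ≤ k) (ℓ : ℕ) :
    ∀ᶠ b in ultrafilterPow (x k).1 ℓ, ∃ N, IsBlockSeqFin k N ℓ b := by
  induction ℓ with
  | zero => exact Eventually.of_forall fun b => ⟨0, nofun, nofun⟩
  | succ ℓ ih =>
    rw [eventually_ultrafilterPow_succ]
    filter_upwards [ih] with b ⟨N, hb⟩
    filter_upwards [hx.eventually_mem_FINf hx1 hk N] with y ⟨⟨N', hy⟩, hyN⟩
    exact ⟨max N N', hb.update hy hyN⟩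

/-- The finitely many ways of forming elements of `TS_j(b_0,…,b_{ℓ-1})^[m]`: pairs of a sequence
`ns` of end points and a sequence `f` of tetris maps up to `k`. Both sequences are made eventually
constant in order to have finitely many of them. -/
def tetrisSchemes (k j m ℓ : ℕ) : Set ((ℕ → ℕ) × (ℕ → ZeroHom ℕ ℕ)) :=
  {p | (Monotone p.1 ∧ p.1 m ≤ ℓ ∧ ∀ i, m ≤ i → p.1 i = p.1 m) ∧
    ((∀ i, p.2 i ∈ tetrisMapsUpTo k) ∧ ∀ i, ℓ ≤ i → p.2 i = p.2 ℓ) ∧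
    ∀ d < m, (Finset.Ico (p.1 d) (p.1 (d + 1))).sup (fun i => p.2 i k) = j}

theorem tetrisSchemes_finite (k j m ℓ : ℕ) : (tetrisSchemes k j m ℓ).Finite := by
  refine ((finite_setOf_eq_of_le (Set.finite_Iic ℓ) m).prod
    (finite_setOf_eq_of_le (tetrisMapsUpTo_finite k) ℓ)).subset ?_
  rintro ⟨ns, f⟩ ⟨⟨hmono, hℓ, hns⟩, hf, -⟩
  refine ⟨⟨fun i => ?_, hns⟩, hf⟩
  rcases le_total i m with hi | hi
  · exact (hmono hi).trans hℓ
  · exact (hns i hi).trans_le hℓ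

theorem exists_monotone_eq_of_le_succ {ns : ℕ → ℕ} {m : ℕ} (hns : ∀ d < m, ns d ≤ ns (d + 1)) :
    ∃ ns' : ℕ → ℕ, Monotone ns' ∧ (∀ i, m ≤ i → ns' i = ns' m) ∧ ∀ d ≤ m, ns' d = ns d := by
  refine ⟨fun i => ns (min i m), monotone_nat_of_le_succ fun i => ?_, fun i hi => ?_,
    fun d hd => congrArg ns (min_eq_left hd)⟩
  · rcases lt_or_ge i m with hi | hi
    · simpa only [min_eq_left hi.le, min_eq_left (Nat.succ_le_of_lt hi)] using hns i hi
    · rw [min_eq_right hi, min_eq_right (hi.trans i.le_succ)]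
  · simp only [min_eq_right hi, min_self]

theorem exists_tetrisMaps_of_isTetrisFn {k N : ℕ} {js : ℕ → ℕ} {fs : ℕ → ℕ → ℕ}
    (hfs : ∀ i < N, IsTetrisFn k (js i) (fs i)) :
    ∃ f : ℕ → ZeroHom ℕ ℕ, (∀ i, f i ∈ tetrisMapsUpTo k) ∧ (∀ i, N ≤ i → f i = 0) ∧
      ∀ i < N, ∀ t ≤ k, f i t = fs i t := by
  have hextend (i : ℕ) : ∃ g ∈ tetrisMapsUpTo k,
      (N ≤ i → g = 0) ∧ (i < N → ∀ t ≤ k, g t = fs i t) := by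
    rcases lt_or_ge i N with hi | hi
    · obtain ⟨g, hg, hgf⟩ := (hfs i hi).exists_mem_tetrisMapsUpTo
      exact ⟨g, hg, fun hi' => absurd hi hi'.not_gt, fun _ => hgf⟩
    · exact ⟨0, ⟨fun _ => Or.inl rfl, fun _ _ => rfl⟩, fun _ => rfl,
        fun hi' => absurd hi' hi.not_gt⟩
  choose f hf hzero heq using hextend
  exact ⟨f, hf, hzero, heq⟩

theorem exists_tetrisScheme_of_mem_TSmfin {k j n m ℓ : ℕ} {b : ℕ → ℕ → ℕ}
    (hb : ∀ i < ℓ, ∀ t, b i t ≤ k) {a : Fin m → ℕ → ℕ} (ha : a ∈ TSmfin k j n m ℓ b) :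
    ∃ p ∈ tetrisSchemes k j m ℓ, a = fun d : Fin m => blockSums p.1 p.2 b m d := by
  obtain ⟨-, ns₀, js, fs, -, hns₀, hℓ, hfs, hblock⟩ := ha
  obtain ⟨ns, hmono, hns, hns_eq⟩ := exists_monotone_eq_of_le_succ fun d hd => (hns₀ d hd).le
  obtain ⟨f, hf, hf_zero, hf_eq⟩ := exists_tetrisMaps_of_isTetrisFn fun i hi => (hfs i hi).2
  rw [← hns_eq m le_rfl] at hℓ hfs hf_zero hf_eq
  have hlt {d i : ℕ} (hd : d < m) (hi : i < ns (d + 1)) : i < ns m := hi.trans_le (hmono hd)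
  have htop {i : ℕ} (hi : i < ns m) : f i k = js i :=
    (hf_eq i hi k le_rfl).trans (hfs i hi).2.map_top
  refine ⟨(ns, f), ⟨⟨hmono, hℓ, hns⟩, ⟨hf, fun i hi => ?_⟩, fun d hd => ?_⟩, funext fun d => ?_⟩
  · exact (hf_zero i (hℓ.trans hi)).trans (hf_zero ℓ hℓ).symm
  · obtain ⟨hle, ⟨i, hi, hi', hij⟩, -⟩ := hblock ⟨d, hd⟩
    rw [← hns_eq d hd.le] at hle hi
    rw [← hns_eq (d + 1) hd] at hle hi'
    refine (Finset.sup_le fun i hi => ?_).antisymm ?_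
    · rw [Finset.mem_Ico] at hi
      exact (htop (hlt hd hi.2)).trans_le (hle i hi.1 hi.2)
    · exact Finset.le_sup_of_le (Finset.mem_Ico.2 ⟨hi, hi'⟩) (hij ▸ htop (hlt hd hi')).ge
  · rw [blockSums_apply ns f b d.2, (hblock d).2.2, ← hns_eq d d.2.le, ← hns_eq (d + 1) d.2]
    refine Finset.sum_congr rfl fun i hi => funext fun t => ?_
    have hi' : i < ns m := hlt d.2 (Finset.mem_Ico.1 hi).2
    exact (hf_eq i hi' _ (hb i (hi'.trans_le hℓ) t)).symm

/-! ### Monochromatic block sequences -/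

theorem exists_isBlockSeqFin_monochromatic {κ : Type*} [Finite κ] {k : ℕ} (hk : 1 ≤ k) (m ℓ : ℕ)
    (C : (Fin m → ℕ → ℕ) → κ) :
    ∃ b N, IsBlockSeqFin k N ℓ b ∧
      ∀ j ≤ k, ∃ v, ∀ n, ∀ a ∈ TSmfin k j n m ℓ b, C a = v := by
  obtain ⟨x, hx, hx1, hmax⟩ := exists_isTower_add_eq_max k
  have hcolor (j : ℕ) :
      ∃ v, ∀ᶠ (a : ℕ → ℕ → ℕ) in ultrafilterPow (x j).1 m, C (fun d : Fin m => a d) = v :=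
    Ultrafilter.eventually_exists_iff.1 <| Eventually.of_forall fun a => ⟨_, rfl⟩
  choose v hv using hcolor
  have hgeneric : ∀ᶠ b in ultrafilterPow (x k).1 ℓ, ∀ j ∈ Set.Iic k, ∀ p ∈ tetrisSchemes k j m ℓ,
      C (fun d : Fin m => blockSums p.1 p.2 b m d) = v j := by
    refine (Set.finite_Iic k).eventually_all.2 fun j _ =>
      (tetrisSchemes_finite k j m ℓ).eventually_all.2 ?_
    rintro ⟨ns, f⟩ ⟨⟨hns, hℓ, -⟩, ⟨hf, -⟩, hj⟩
    rw [eventually_ultrafilterPow_of_le hℓ fun b i y hi => by rw [blockSums_update hns f b hi]]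
    exact (hx.eventually_blockSums hmax hns (fun i => (hf i).1) hj
      (P := fun a => C (fun d : Fin m => a d) = v j)).2 (hv j)
  obtain ⟨b, ⟨N, hb⟩, hmono⟩ := ((hx.eventually_isBlockSeqFin hx1 hk ℓ).and hgeneric).exists
  refine ⟨b, N, hb, fun j hj => ⟨v j, fun n a ha => ?_⟩⟩
  obtain ⟨p, hp, rfl⟩ := exists_tetrisScheme_of_mem_TSmfin (fun i hi => (hb.1 i hi).1) ha
  exact hmono j hj p hp

theorem apply_eq_zero_of_mem_TSmfin {k j n m ℓ t : ℕ} {b : ℕ → ℕ → ℕ}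
    (hb : ∀ i < ℓ, b i t = 0) {a : Fin m → ℕ → ℕ} (ha : a ∈ TSmfin k j n m ℓ b) (d : Fin m) :
    a d t = 0 := by
  obtain ⟨-, ns, js, fs, -, hns, hℓ, hfs, hblock⟩ := ha
  obtain ⟨ns', hmono, -, hns_eq⟩ := exists_monotone_eq_of_le_succ fun d hd => (hns d hd).le
  have hend : ns (d + 1) ≤ ns m := hns_eq (d + 1) d.2 ▸ hns_eq m le_rfl ▸ hmono d.2
  rw [(hblock d).2.2, Finset.sum_apply]
  refine Finset.sum_eq_zero fun i hi => ?_
  have hi' : i < ns m := (Finset.mem_Ico.1 hi).2.trans_le hend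
  rw [comp_apply, hb i (hi'.trans_le hℓ), (hfs i hi').2.map_zero]

/-- In the compact space `A → κ`, the `C'` agreeing with `C` on `D` form a neighborhood of `C`. -/
theorem eventually_forall_of_finite_dependence {A κ ι : Type*} [Finite κ] {l : Filter ι}
    {good : ι → (A → κ) → Prop}
    (h : ∀ C, ∃ D : Set A, D.Finite ∧ ∀ᶠ n in l, ∀ C', Set.EqOn C' C D → good n C') :
    ∀ᶠ n in l, ∀ C, good n C := by
  let : TopologicalSpace κ := ⊥
  have : DiscreteTopology κ := ⟨rfl⟩
  suffices ∀ᶠ n in l, ∀ C ∈ Set.univ, good n C by simpa using this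
  refine isCompact_univ.induction_on (p := fun s => ∀ᶠ n in l, ∀ C ∈ s, good n C) (by simp)
    (fun s t hst ht => ht.mono fun n hn C hC => hn C (hst hC)) (fun s t hs ht => ?_) fun C _ => ?_
  · filter_upwards [hs, ht] with n hns hnt C hC using hC.elim (hns C) (hnt C)
  · obtain ⟨D, hD, hgood⟩ := h C
    have hnhds : D.pi (fun a => {C a}) ∈ nhds C :=
      set_pi_mem_nhds hD fun a _ => (isOpen_discrete {C a}).mem_nhds rfl
    exact ⟨_, mem_nhdsWithin_of_mem_nhds hnhds, hgood⟩

theorem finite_setOf_le_and_eq_zero (ι : Type*) [Finite ι] (k N : ℕ) :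
    {a : ι → ℕ → ℕ | ∀ d, (∀ i, a d i ≤ k) ∧ ∀ i, N ≤ i → a d i = 0}.Finite := by
  have hrow : {g : ℕ → ℕ | (∀ i, g i ≤ k) ∧ ∀ i, N ≤ i → g i = 0}.Finite :=
    (finite_setOf_eq_of_le (Set.finite_Iic k) N).subset fun g hg =>
      ⟨hg.1, fun i hi => (hg.2 i hi).trans (hg.2 N le_rfl).symm⟩
  exact Set.Finite.pi' fun _ => hrow

theorem exists_forall_exists_isBlockSeqFin_monochromatic (κ : Type*) [Finite κ] {k : ℕ} (hk : 1 ≤ k)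
    (m ℓ : ℕ) :
    ∃ n, ∀ C : (Fin m → ℕ → ℕ) → κ, ∃ b, IsBlockSeqFin k n ℓ b ∧
      ∀ j ≤ k, ∀ a ∈ TSmfin k j n m ℓ b, ∀ a' ∈ TSmfin k j n m ℓ b, C a = C a' := by
  refine (eventually_forall_of_finite_dependence (l := atTop) fun C => ?_).exists
  obtain ⟨b, N, hb, hmono⟩ := exists_isBlockSeqFin_monochromatic hk m ℓ C
  refine ⟨_, finite_setOf_le_and_eq_zero (Fin m) k N, ?_⟩
  filter_upwards [eventually_ge_atTop N] with n hn C' hC'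
  refine ⟨b, hb.mono hn, fun j hj => ?_⟩
  obtain ⟨v, hv⟩ := hmono j hj
  have hC'v (a) (ha : a ∈ TSmfin k j n m ℓ b) : C' a = v :=
    (hC' fun d => ⟨fun t => ((ha.1.1 d).1 t).trans hj, fun t ht =>
      apply_eq_zero_of_mem_TSmfin (fun i hi => (hb.1 i hi).2.1 t ht) ha d⟩).trans (hv n a ha)
  exact fun a ha a' ha' => (hC'v a ha).trans (hC'v a' ha').symm

/-- Finitary multidimensional Gowers theorem for generalized tetris operations. -/
theorem gowers_generalized_tetris_multidim_finitary (m k ℓ r : ℕ)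
    (hm : 1 ≤ m) (hk : 1 ≤ k) (hℓ : 1 ≤ ℓ) (hr : 1 ≤ r) :
    ∃ n : ℕ, ∀ c : (Fin m → ℕ → ℕ) → ℕ,
      (∀ t : Fin m → ℕ → ℕ, (∃ j, 1 ≤ j ∧ j ≤ k ∧ IsBlockTupleFin j n m t) → c t < r) →
      ∃ b : ℕ → ℕ → ℕ, IsBlockSeqFin k n ℓ b ∧
        ∀ j, 1 ≤ j → j ≤ k →
          ∀ a ∈ TSmfin k j n m ℓ b, ∀ a' ∈ TSmfin k j n m ℓ b, c a = c a' := by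
  obtain ⟨n, hn⟩ := exists_forall_exists_isBlockSeqFin_monochromatic (Fin r) hk m ℓ
  refine ⟨n, fun c hc => ?_⟩
  obtain ⟨b, hb, hmono⟩ := hn fun t => ⟨c t % r, Nat.mod_lt _ hr⟩
  refine ⟨b, hb, fun j hj1 hjk a ha a' ha' => ?_⟩
  have hmod {t : Fin m → ℕ → ℕ} (ht : t ∈ TSmfin k j n m ℓ b) : c t % r = c t :=
    Nat.mod_eq_of_lt (hc t ⟨j, hj1, hjk, ht.1⟩)
  rw [← hmod ha, ← hmod ha']
  exact congrArg Fin.val (hmono j hjk a ha a' ha')
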